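/- Let Q : F₂^m → F₂^n be a quadratic map which is effective (Q(w) = 0 implies w = 0) and Bockstein closed, with associated quadratic polynomials q₁,…,q_n ∈ F₂[x₁,…,x_m]. Then m ≤ n. Moreover, if m = n, then q₁,…,q_n, and any permutation of them, form a regular sequence in F₂[x₁,…,x_m]. -/

import Mathlib

/-!
On quadrics the total Steenrod square, the ring endomorphism with `Sq xᵢ = xᵢ + xᵢ²`, is
`Sq p = p + β p + p²`. If `Q` is Bockstein closed, the common zeros of the `q_k` over a field
`K ⊇ F₂` are therefore stable under `w ↦ w + w²`, and they are stable under scaling. A nonzero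
common zero of minimal support, scaled to have a coordinate equal to `1`, must satisfy
`w + w² = 0`, since `w + w²` has smaller support; so `w ∈ F₂^m`, contradicting effectiveness.
Taking for `K` the residue fields of the primes containing `I(Q)`, we see that `(x₁, …, x_m)` is
a minimal prime of `I(Q)`.

Localise at the origin. For a nonzerodivisor `a` on a finite module `N`, every associated prime
of `N` lies strictly inside one of `N / aN`; so the regular sequence `x₁, …, x_m` forces every
associated prime to have coheight at least `m`, and Krull's height theorem gives `m ≤ n`.
If `m = n`, the same bound keeps `q₁` out of all associated primes. By the `Ext` characterisation
of depth, the quotient by `q₁` still has a regular sequence of length `m - 1`, and one proceeds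
by induction on the number of polynomials.
Regularity descends from the local ring because the ideals involved are homogeneous: a multiplier
with invertible constant term can be cancelled degree by degree.
-/

open MvPolynomial

/-- The polarization (associated bilinear map) of a map `Q`:
`B(x,y) = Q(x+y) + Q(x) + Q(y)`. -/
def qpolar {W V : Type*} [Add W] [Add V] (Q : W → V) (x y : W) : V :=
  Q (x + y) + Q x + Q y

/-- `Q` is a quadratic map between `F₂`-vector spaces: its polarization is `F₂`-bilinear. -/
def IsQuadraticMap {W V : Type*} [AddCommGroup W] [Module (ZMod 2) W]
    [AddCommGroup V] [Module (ZMod 2) V] (Q : W → V) : Prop :=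
  (∀ x y z : W, qpolar Q (x + y) z = qpolar Q x z + qpolar Q y z) ∧
  (∀ x y z : W, qpolar Q x (y + z) = qpolar Q x y + qpolar Q x z)

/-- The Bockstein operator: the unique `F₂`-derivation of `F₂[x₁,…,x_m]`
with `β(x_i) = x_i²`, given by `β(f) = Σ_i x_i² ∂f/∂x_i`. -/
noncomputable def bockstein {m : ℕ} (f : MvPolynomial (Fin m) (ZMod 2)) :
    MvPolynomial (Fin m) (ZMod 2) :=
  ∑ i : Fin m, X i ^ 2 * pderiv i f

/-- The quadratic polynomials associated to a quadratic map `Q : F₂^m → F₂^n`: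
`q_k = Σ_i Q_k(e_i) x_i² + Σ_{i<j} B_k(e_i,e_j) x_i x_j`. -/
noncomputable def assocPoly {m n : ℕ} (Q : (Fin m → ZMod 2) → (Fin n → ZMod 2)) (k : Fin n) :
    MvPolynomial (Fin m) (ZMod 2) :=
  (∑ i : Fin m, C (Q (Pi.single i 1) k) * X i ^ 2) +
  ∑ i : Fin m, ∑ j : Fin m,
    if i < j then C (qpolar Q (Pi.single i 1) (Pi.single j 1) k) * X i * X j else 0

/-- `f₁,…,f_r` is a regular sequence: each `f_k` is a nonzerodivisor in the quotient
ring modulo the ideal generated by its predecessors. -/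
def IsRegularSeq {R : Type*} [CommRing R] {r : ℕ} (f : Fin r → R) : Prop :=
  ∀ k : Fin r, ∀ g : R,
    f k * g ∈ Ideal.span (f '' {j | j < k}) → g ∈ Ideal.span (f '' {j | j < k})

open RingTheory.Sequence IsLocalRing CategoryTheory Abelian Pointwise

section LocalAlgebra

universe v

theorem mem_minimalPrimes_of_le {R : Type*} [CommSemiring R] {I J P : Ideal R}
    (hP : P ∈ I.minimalPrimes) (hIJ : I ≤ J) (hJP : J ≤ P) : P ∈ J.minimalPrimes :=
  ⟨⟨hP.isPrime, hJP⟩, fun _ hp hle => hP.2 ⟨hp.1, hIJ.trans hp.2⟩ hle⟩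

theorem annihilator_le_of_isAssociatedPrime {R N : Type*} [CommSemiring R] [AddCommMonoid N]
    [Module R N] {P : Ideal R} (hP : IsAssociatedPrime P N) : Module.annihilator R N ≤ P := by
  rw [← Submodule.annihilator_top]
  exact hP.annihilator_le

variable {R : Type*} [CommRing R]

theorem ringKrullDim_quotient_eq_coheight (P : PrimeSpectrum R) :
    ringKrullDim (R ⧸ P.asIdeal) = Order.coheight P := by
  rw [ringKrullDim_quotient, Order.coheight_eq_krullDim_Ici]
  rfl

theorem annihilator_sup_span_le_annihilator_quotSMulTop (y : R)
    (N : Type*) [AddCommGroup N] [Module R N] :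
    Module.annihilator R N ⊔ Ideal.span {y} ≤ Module.annihilator R (QuotSMulTop y N) :=
  sup_le ((Submodule.mkQ _).annihilator_le_of_surjective (Submodule.mkQ_surjective _))
    ((Ideal.span_singleton_le_iff_mem _).mpr (QuotSMulTop.mem_annihilator N y))

theorem notMem_of_isAssociatedPrime {N : Type*} [AddCommGroup N] [Module R N] {P : Ideal R}
    (hP : IsAssociatedPrime P N) {a : R} (hreg : IsSMulRegular N a) : a ∉ P := by
  obtain ⟨hprime, x, rfl⟩ := hP
  rintro ⟨n, hn⟩
  rw [Submodule.mem_colon_singleton, Submodule.mem_bot] at hn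
  have hx : x = 0 := (hreg.pow n).right_eq_zero_of_smul hn
  exact hprime.ne_top (by simp [hx])

theorem subsingleton_ext_quotSMulTop [Small.{v} R] {K N : ModuleCat.{v} R} {y : R}
    (hy : IsSMulRegular N y) {i : ℕ} (hi : Subsingleton (Ext K N i))
    (hi' : Subsingleton (Ext K N (i + 1))) :
    Subsingleton (Ext K (ModuleCat.of R (QuotSMulTop y N)) i) := by
  have hzero := AddCommGrpCat.isZero_of_iff_subsingleton.mpr hi
  have hzero' := AddCommGrpCat.isZero_of_iff_subsingleton.mpr hi'
  exact AddCommGrpCat.subsingleton_of_isZero <| ShortComplex.Exact.isZero_of_both_zeros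
    (Ext.covariant_sequence_exact₃' K hy.smulShortComplex_shortExact i (i + 1) rfl)
    (hzero.eq_zero_of_src _) (hzero'.eq_zero_of_tgt _)

theorem maximalIdeal_smul_top_lt_top [IsLocalRing R] (N : Type*) [AddCommGroup N] [Module R N]
    [Module.Finite R N] [Nontrivial N] : maximalIdeal R • (⊤ : Submodule R N) < ⊤ :=
  lt_top_iff_ne_top.mpr
    (Submodule.top_ne_ideal_smul_of_le_jacobson_annihilator (maximalIdeal_le_jacobson _)).symm

variable [IsNoetherianRing R]

theorem height_le_length_of_mem_minimalPrimes {P : Ideal R} {bs : List R}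
    (hP : P ∈ (Ideal.ofList bs).minimalPrimes) : P.height ≤ bs.length := by
  classical
  have hspan : Ideal.ofList bs = Ideal.span (bs.toFinset : Set R) := by
    simp [Ideal.ofList]
  rw [hspan] at hP
  calc P.height ≤ bs.toFinset.card := Ideal.height_le_card_of_mem_minimalPrimes_span_finset hP
    _ ≤ bs.length := mod_cast bs.toFinset_card_le

theorem torsionBySet_ne_bot_of_isAssociatedPrime {N : Type*} [AddCommGroup N] [Module R N]
    {P : Ideal R} (hP : IsAssociatedPrime P N) : Submodule.torsionBySet R N (P : Set R) ≠ ⊥ := by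
  obtain ⟨hprime, x, hx⟩ := isAssociatedPrime_iff.mp hP
  intro hbot
  have hxP : x ∈ Submodule.torsionBySet R N (P : Set R) := by
    rw [Submodule.mem_torsionBySet_iff]
    rintro ⟨p, hp⟩
    simpa [hx, Submodule.mem_colon_singleton] using hp
  rw [hbot, Submodule.mem_bot] at hxP
  exact hprime.ne_top (by simp [hx, hxP])

theorem torsionBySet_not_le_smul_top {N : Type*} [AddCommGroup N] [Module R N]
    [Module.Finite R N] {s : Set R} {a : R} (ha : a ∈ (⊥ : Ideal R).jacobson)
    (hreg : IsSMulRegular N a) (hs : Submodule.torsionBySet R N s ≠ ⊥) :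
    ¬ Submodule.torsionBySet R N s ≤ a • (⊤ : Submodule R N) := by
  intro hle
  refine hs (Submodule.eq_bot_of_le_smul_of_le_jacobson_bot (Ideal.span {a}) _
    (IsNoetherian.noetherian _) ?_ ?_)
  · intro x hx
    obtain ⟨y, -, rfl⟩ := (Submodule.mem_smul_pointwise_iff_exists _ _ _).mp (hle hx)
    refine Submodule.smul_mem_smul (Ideal.mem_span_singleton_self a) ?_
    rw [Submodule.mem_torsionBySet_iff] at hx ⊢
    refine fun p => hreg.right_eq_zero_of_smul ?_
    rw [smul_comm, hx p]
  · exact (Ideal.span_singleton_le_iff_mem _).mpr ha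

theorem exists_isAssociatedPrime_quotSMulTop_gt {N : Type*} [AddCommGroup N] [Module R N]
    [Module.Finite R N] {P : Ideal R} (hP : IsAssociatedPrime P N) {a : R}
    (ha : a ∈ (⊥ : Ideal R).jacobson) (hreg : IsSMulRegular N a) :
    ∃ P', IsAssociatedPrime P' (QuotSMulTop a N) ∧ P < P' := by
  obtain ⟨t, ht, hta⟩ := Set.not_subset.mp <|
    torsionBySet_not_le_smul_top ha hreg (torsionBySet_ne_bot_of_isAssociatedPrime hP)
  have ht0 : (Submodule.Quotient.mk t : QuotSMulTop a N) ≠ 0 :=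
    fun h => hta ((Submodule.Quotient.mk_eq_zero _).mp h)
  obtain ⟨P', hP', hle⟩ := exists_le_isAssociatedPrime_of_isNoetherianRing (R := R) _ ht0
  have hmem : ∀ r : R, r • t ∈ a • (⊤ : Submodule R N) → r ∈ P' := fun r hr => hle (by
    rwa [Submodule.mem_colon_singleton, Submodule.mem_bot, ← Submodule.Quotient.mk_smul,
      Submodule.Quotient.mk_eq_zero])
  rw [SetLike.mem_coe, Submodule.mem_torsionBySet_iff] at ht
  refine ⟨P', hP', lt_of_le_of_ne (fun p hp => hmem p ?_) ?_⟩
  · simp [ht ⟨p, hp⟩]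
  · rintro rfl
    exact notMem_of_isAssociatedPrime hP hreg
      (hmem a (Submodule.smul_mem_pointwise_smul _ _ _ trivial))

theorem length_le_coheight_of_isAssociatedPrime (rs : List R) {N : Type*} [AddCommGroup N]
    [Module R N] [Module.Finite R N] (hrs : ∀ r ∈ rs, r ∈ (⊥ : Ideal R).jacobson)
    (hreg : IsWeaklyRegular N rs) {P : PrimeSpectrum R} (hP : IsAssociatedPrime P.asIdeal N) :
    (rs.length : ℕ∞) ≤ Order.coheight P := by
  induction rs generalizing N P with
  | nil => simp
  | cons a rs ih =>
    rw [isWeaklyRegular_cons_iff] at hreg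
    rw [List.forall_mem_cons] at hrs
    obtain ⟨P', hP', hlt⟩ := exists_isAssociatedPrime_quotSMulTop_gt hP hrs.1 hreg.1
    calc ((a :: rs).length : ℕ∞) = rs.length + 1 := by simp
      _ ≤ Order.coheight (⟨P', hP'.1⟩ : PrimeSpectrum R) + 1 := by
        gcongr; exact ih hrs.2 hreg.2 hP'
      _ ≤ Order.coheight P := Order.coheight_add_one_le hlt

variable [IsLocalRing R]

theorem ringKrullDim_quotient_le_length {J : Ideal R} {bs : List R}
    (h : maximalIdeal R ∈ (J ⊔ Ideal.ofList bs).minimalPrimes) :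
    ringKrullDim (R ⧸ J) ≤ bs.length := by
  have hJ : J ≠ ⊤ := ne_top_of_le_ne_top Ideal.IsPrime.ne_top' (le_sup_left.trans h.1.2)
  have hsurj : Function.Surjective (Ideal.Quotient.mk J) := Ideal.Quotient.mk_surjective
  have : Nontrivial (R ⧸ J) := Ideal.Quotient.nontrivial_iff.mpr hJ
  have : IsLocalRing (R ⧸ J) := IsLocalRing.of_surjective' _ hsurj
  have hmin : maximalIdeal (R ⧸ J) ∈
      (Ideal.ofList (bs.map (Ideal.Quotient.mk J))).minimalPrimes := by
    rw [← Ideal.map_ofList, Ideal.minimalPrimes_map_of_surjective hsurj, Ideal.mk_ker, sup_comm]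
    exact ⟨_, h, map_maximalIdeal_of_surjective _ hsurj⟩
  rw [← maximalIdeal_height_eq_ringKrullDim, ← bs.length_map (f := Ideal.Quotient.mk J)]
  exact mod_cast height_le_length_of_mem_minimalPrimes hmin

theorem exists_isRegular_iff_subsingleton_ext [Small.{v} R] (N : Type v) [AddCommGroup N]
    [Module R N] [Module.Finite R N] [Nontrivial N] (n : ℕ) :
    (∃ rs : List R, rs.length = n ∧ (∀ r ∈ rs, r ∈ maximalIdeal R) ∧ IsRegular N rs) ↔
      ∀ i < n, Subsingleton
        (Ext (ModuleCat.of R (Shrink.{v} (R ⧸ maximalIdeal R))) (ModuleCat.of R N) i) :=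
  (ModuleCat.exists_isRegular_tfae (maximalIdeal R) n (ModuleCat.of R N)
    (maximalIdeal_smul_top_lt_top N)).out 3 1

theorem exists_isRegular_quotSMulTop [Small.{v} R] {N : Type v} [AddCommGroup N] [Module R N]
    [Module.Finite R N] [Nontrivial N] {n : ℕ}
    (hreg : ∃ rs : List R, rs.length = n + 1 ∧ (∀ r ∈ rs, r ∈ maximalIdeal R) ∧ IsRegular N rs)
    {y : R} (hy : y ∈ maximalIdeal R) (hyreg : IsSMulRegular N y) :
    ∃ ss : List R, ss.length = n ∧ (∀ s ∈ ss, s ∈ maximalIdeal R) ∧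
      IsRegular (QuotSMulTop y N) ss := by
  have := nontrivial_quotSMulTop_of_mem_maximalIdeal N hy
  have hext := (exists_isRegular_iff_subsingleton_ext N (n + 1)).mp hreg
  exact (exists_isRegular_iff_subsingleton_ext (QuotSMulTop y N) n).mpr fun i hi =>
    subsingleton_ext_quotSMulTop (N := ModuleCat.of R N) hyreg (hext i (by omega))
      (hext (i + 1) (by omega))

theorem length_le_length_of_isAssociatedPrime {N : Type*} [AddCommGroup N] [Module R N]
    [Module.Finite R N] {P : Ideal R} (hP : IsAssociatedPrime P N) {rs bs : List R}
    (hrs : ∀ r ∈ rs, r ∈ maximalIdeal R) (hreg : IsWeaklyRegular N rs)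
    (hbs : maximalIdeal R ∈ (P ⊔ Ideal.ofList bs).minimalPrimes) :
    rs.length ≤ bs.length := by
  let p : PrimeSpectrum R := ⟨P, hP.isPrime⟩
  have hdepth : (rs.length : ℕ∞) ≤ Order.coheight p :=
    length_le_coheight_of_isAssociatedPrime rs
      (by rwa [jacobson_eq_maximalIdeal _ bot_ne_top]) hreg hP
  have hdim : (Order.coheight p : WithBot ℕ∞) ≤ bs.length := by
    rw [← ringKrullDim_quotient_eq_coheight]
    exact ringKrullDim_quotient_le_length hbs
  exact mod_cast hdepth.trans (mod_cast hdim)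

theorem isSMulRegular_of_mem_minimalPrimes {N : Type*} [AddCommGroup N] [Module R N]
    [Module.Finite R N] {rs : List R} (hrs : ∀ r ∈ rs, r ∈ maximalIdeal R)
    (hreg : IsWeaklyRegular N rs) {b : R} {bs : List R} (hlen : bs.length < rs.length)
    (hmin : maximalIdeal R ∈ (Module.annihilator R N ⊔ Ideal.ofList (b :: bs)).minimalPrimes) :
    IsSMulRegular N b := by
  by_contra hb
  have hzero : b ∈ ⋃ P ∈ associatedPrimes R N, (P : Set R) := by
    rw [biUnion_associatedPrimes_eq_compl_regular]; exact hb
  obtain ⟨P, hP, hbP⟩ := Set.mem_iUnion₂.mp hzero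
  replace hP : IsAssociatedPrime P N := hP
  have hann : Module.annihilator R N ≤ P := annihilator_le_of_isAssociatedPrime hP
  have hle : Ideal.ofList (b :: bs) ≤ P ⊔ Ideal.ofList bs := by
    rw [Ideal.ofList_cons]
    exact sup_le_sup_right ((Ideal.span_singleton_le_iff_mem _).mpr hbP) _
  have hbs : Ideal.ofList bs ≤ maximalIdeal R :=
    le_trans (by simp [Ideal.ofList_cons]) (le_sup_right.trans hmin.1.2)
  exact hlen.not_ge <| length_le_length_of_isAssociatedPrime hP hrs hreg <|
    mem_minimalPrimes_of_le hmin (sup_le (hann.trans le_sup_left) hle)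
      (sup_le (le_maximalIdeal hP.isPrime.ne_top) hbs)

theorem length_le_length_of_mem_minimalPrimes {N : Type*} [AddCommGroup N] [Module R N]
    [Module.Finite R N] [Nontrivial N] {rs bs : List R} (hrs : ∀ r ∈ rs, r ∈ maximalIdeal R)
    (hreg : IsWeaklyRegular N rs)
    (hmin : maximalIdeal R ∈ (Module.annihilator R N ⊔ Ideal.ofList bs).minimalPrimes) :
    rs.length ≤ bs.length := by
  obtain ⟨P, hP⟩ := associatedPrimes.nonempty R N
  replace hP : IsAssociatedPrime P N := hP
  have hann : Module.annihilator R N ≤ P := annihilator_le_of_isAssociatedPrime hP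
  exact length_le_length_of_isAssociatedPrime hP hrs hreg <|
    mem_minimalPrimes_of_le hmin (sup_le_sup_right hann _)
      (sup_le (le_maximalIdeal hP.isPrime.ne_top) (le_sup_right.trans hmin.1.2))

theorem isWeaklyRegular_of_mem_minimalPrimes [Small.{v} R] {N : Type v} [AddCommGroup N]
    [Module R N] [Module.Finite R N] [Nontrivial N] {rs bs : List R}
    (hrs : ∀ r ∈ rs, r ∈ maximalIdeal R) (hreg : IsRegular N rs) (hlen : rs.length = bs.length)
    (hmin : maximalIdeal R ∈ (Module.annihilator R N ⊔ Ideal.ofList bs).minimalPrimes) :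
    IsWeaklyRegular N bs := by
  induction bs generalizing N rs with
  | nil => simp
  | cons b bs ih =>
    have hb : IsSMulRegular N b :=
      isSMulRegular_of_mem_minimalPrimes hrs hreg.1 (by simp [hlen]) hmin
    rw [Ideal.ofList_cons, ← sup_assoc] at hmin
    have hbmax : b ∈ maximalIdeal R :=
      hmin.1.2 (Ideal.mem_sup_left (Ideal.mem_sup_right (Ideal.mem_span_singleton_self b)))
    have := nontrivial_quotSMulTop_of_mem_maximalIdeal N hbmax
    obtain ⟨ss, hss_len, hss, hss_reg⟩ :=
      exists_isRegular_quotSMulTop ⟨rs, hlen, hrs, hreg⟩ hbmax hb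
    refine (isWeaklyRegular_cons_iff ..).mpr ⟨hb, ih hss hss_reg hss_len ?_⟩
    have hann : Module.annihilator R (QuotSMulTop b N) ≤ maximalIdeal R :=
      le_maximalIdeal (mt Module.annihilator_eq_top_iff.mp (not_subsingleton _))
    exact mem_minimalPrimes_of_le hmin
      (sup_le_sup_right (annihilator_sup_span_le_annihilator_quotSMulTop b N) _)
      (sup_le hann (le_sup_right.trans hmin.1.2))

end LocalAlgebra

theorem mem_idealOfVars_iff {σ R : Type*} [CommSemiring R] {p : MvPolynomial σ R} :
    p ∈ idealOfVars σ R ↔ constantCoeff p = 0 := by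
  rw [← pow_one (idealOfVars σ R), mem_pow_idealOfVars_iff']
  simp [Finsupp.degree_eq_zero_iff, constantCoeff_eq]

theorem mem_idealOfVars_of_isHomogeneous {σ R : Type*} [CommSemiring R] {p : MvPolynomial σ R}
    {d : ℕ} (hp : p.IsHomogeneous d) (hd : d ≠ 0) : p ∈ idealOfVars σ R :=
  mem_idealOfVars_iff.mpr (hp.coeff_eq_zero (by simpa using hd.symm))

instance isPrime_idealOfVars (σ R : Type*) [CommRing R] [IsDomain R] :
    (idealOfVars σ R).IsPrime := by
  have hker : idealOfVars σ R = RingHom.ker (constantCoeff : MvPolynomial σ R →+* R) :=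
    Ideal.ext fun _ => mem_idealOfVars_iff
  rw [hker]
  exact RingHom.ker_isPrime _

section Homogeneous

open Finset.HasAntidiagonal (antidiagonal mem_antidiagonal)

attribute [local instance] MvPolynomial.gradedAlgebra

theorem homogeneousComponent_mul {σ R : Type*} [CommSemiring R] (n : ℕ) (p q : MvPolynomial σ R) :
    homogeneousComponent n (p * q) = ∑ ij ∈ antidiagonal n,
      homogeneousComponent ij.1 p * homogeneousComponent ij.2 q := by
  have hcomponent (r : MvPolynomial σ R) (i : ℕ) :
      (DirectSum.decompose (homogeneousSubmodule σ R) r i : MvPolynomial σ R) =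
        homogeneousComponent i r := decomposition.decompose'_apply r i
  simp only [← hcomponent, DirectSum.decompose_mul, DirectSum.coe_mul_apply_eq_sum_antidiagonal]

theorem mem_of_mul_mem_of_isUnit_constantCoeff {σ R : Type*} [CommRing R]
    {J : Ideal (MvPolynomial σ R)} (hJ : J.IsHomogeneous (homogeneousSubmodule σ R))
    {s g : MvPolynomial σ R} (hs : IsUnit (constantCoeff s)) (hsg : s * g ∈ J) : g ∈ J := by
  rw [mem_iff_homogeneousComponent_mem hJ]
  intro n
  induction n using Nat.strong_induction_on with
  | _ n ih =>
    have hn : homogeneousComponent n (s * g) ∈ J := homogeneousComponent_mem_of_mem hJ hsg n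
    have htail : ∑ ij ∈ (antidiagonal n).erase (0, n),
        homogeneousComponent ij.1 s * homogeneousComponent ij.2 g ∈ J := by
      refine J.sum_mem fun ij hij => J.mul_mem_left _ (ih ij.2 ?_)
      simp only [Finset.mem_erase, mem_antidiagonal, ne_eq, Prod.ext_iff] at hij
      omega
    rw [homogeneousComponent_mul,
      ← Finset.add_sum_erase _ _ (show (0, n) ∈ antidiagonal n by simp),
      J.add_mem_iff_left htail, homogeneousComponent_zero] at hn
    exact (J.unit_mul_mem_iff_mem (hs.map C)).mp hn

theorem comap_map_span_le_of_isHomogeneous {σ k : Type*} [Field k] {F : Set (MvPolynomial σ k)}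
    (hF : ∀ p ∈ F, ∃ d, p.IsHomogeneous d) (A : Type*) [CommRing A]
    [Algebra (MvPolynomial σ k) A] [IsLocalization.AtPrime A (idealOfVars σ k)] :
    ((Ideal.span F).map (algebraMap _ A)).comap (algebraMap _ A) ≤ Ideal.span F := by
  intro g hg
  obtain ⟨s, hs, hsg⟩ := (IsLocalization.algebraMap_mem_map_algebraMap_iff
    (idealOfVars σ k).primeCompl A (Ideal.span F) g).mp hg
  have hunit : IsUnit (constantCoeff s) := .mk0 _ (mt mem_idealOfVars_iff.mpr hs)
  exact mem_of_mul_mem_of_isUnit_constantCoeff (Ideal.homogeneous_span _ _ hF) hunit hsg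

end Homogeneous

theorem ofList_ofFn {R : Type*} [CommSemiring R] {r : ℕ} (f : Fin r → R) :
    Ideal.ofList (List.ofFn f) = Ideal.span (Set.range f) := by
  simp [Ideal.ofList, List.mem_ofFn, Set.range]

theorem ofList_take_ofFn {R : Type*} [CommSemiring R] {r : ℕ} (f : Fin r → R) (k : Fin r) :
    Ideal.ofList ((List.ofFn f).take k) = Ideal.span (f '' {j | j < k}) := by
  rw [Ideal.ofList]
  congr 1
  ext x
  simp only [Set.mem_ofPred_eq, Set.mem_image, List.mem_take_iff_getElem, List.length_ofFn,
    List.getElem_ofFn, lt_min_iff]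
  constructor
  · rintro ⟨i, hi, rfl⟩
    exact ⟨⟨i, hi.2⟩, hi.1, rfl⟩
  · rintro ⟨j, hj, rfl⟩
    exact ⟨j, ⟨hj, j.2⟩, rfl⟩

theorem isRegularSeq_iff_isWeaklyRegular_ofFn {R : Type*} [CommRing R] {r : ℕ} (f : Fin r → R) :
    IsRegularSeq f ↔ IsWeaklyRegular R (List.ofFn f) := by
  rw [isWeaklyRegular_iff_Fin, (finCongr List.length_ofFn).forall_congr_left]
  refine forall_congr' fun k => ?_
  rw [isSMulRegular_quotient_iff_mem_of_smul_mem]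
  simp [ofList_take_ofFn]

theorem IsRegularSeq.of_map {R S : Type*} [CommRing R] [CommRing S] (φ : R →+* S) {r : ℕ}
    {f : Fin r → R} (hreg : IsRegularSeq (φ ∘ f))
    (hcomap : ∀ k, ((Ideal.span (f '' {j | j < k})).map φ).comap φ ≤
      Ideal.span (f '' {j | j < k})) : IsRegularSeq f := by
  intro k g hg
  refine hcomap k (Ideal.mem_comap.mpr ?_)
  rw [Ideal.map_span, ← Set.image_comp]
  refine hreg k (φ g) ?_
  rw [Set.image_comp, ← Ideal.map_span, Function.comp_apply, ← map_mul]
  exact Ideal.mem_map_of_mem φ hg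

theorem isRegularSeq_X (R : Type*) [CommRing R] (m : ℕ) :
    IsRegularSeq (X : Fin m → MvPolynomial (Fin m) R) := by
  intro k g hg
  rw [mem_ideal_span_X_image] at hg ⊢
  intro d hd
  obtain ⟨i, hi, hne⟩ := hg (Finsupp.single k 1 + d) <| by
    rwa [mem_support_iff, coeff_X_mul, ← mem_support_iff]
  have hki : k ≠ i := ne_of_gt hi
  exact ⟨i, hi, by simpa [Finsupp.single_apply, hki] using hne⟩

theorem maximalIdeal_mem_minimalPrimes_map {R : Type*} [CommRing R] {J P : Ideal R} [P.IsPrime]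
    (hP : P ∈ J.minimalPrimes) (A : Type*) [CommRing A] [Algebra R A]
    [IsLocalization.AtPrime A P] [IsLocalRing A] :
    maximalIdeal A ∈ (J.map (algebraMap R A)).minimalPrimes := by
  rw [IsLocalization.minimalPrimes_map P.primeCompl, Set.mem_preimage,
    IsLocalization.AtPrime.under_maximalIdeal A P]
  exact hP

section Origin

variable {k : Type*} [CommRing k] [IsDomain k] {m n : ℕ} (A : Type*) [CommRing A]
  [Algebra (MvPolynomial (Fin m) k) A] [IsLocalization.AtPrime A (idealOfVars (Fin m) k)]

theorem isRegular_map_X :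
    IsRegular A ((List.ofFn X).map (algebraMap (MvPolynomial (Fin m) k) A)) := by
  refine IsWeaklyRegular.isRegular_of_isLocalization_of_mem A (idealOfVars (Fin m) k)
    ((isRegularSeq_iff_isWeaklyRegular_ofFn _).mp (isRegularSeq_X k m)) ?_
  rw [List.forall_mem_ofFn_iff]
  exact fun i => Ideal.subset_span ⟨i, rfl⟩

variable [IsLocalRing A]

theorem mem_maximalIdeal_of_mem_map_X :
    ∀ a ∈ (List.ofFn X).map (algebraMap (MvPolynomial (Fin m) k) A), a ∈ maximalIdeal A := by
  rw [List.forall_mem_map, List.forall_mem_ofFn_iff]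
  exact fun i => (IsLocalization.AtPrime.to_map_mem_maximal_iff A (idealOfVars (Fin m) k) _).mpr
    (Ideal.subset_span ⟨i, rfl⟩)

theorem maximalIdeal_mem_minimalPrimes_map_ofFn {f : Fin n → MvPolynomial (Fin m) k}
    (hmin : idealOfVars (Fin m) k ∈ (Ideal.span (Set.range f)).minimalPrimes) :
    maximalIdeal A ∈ (Module.annihilator A A ⊔
      Ideal.ofList ((List.ofFn f).map (algebraMap _ A))).minimalPrimes := by
  rw [Module.annihilator_eq_bot.mpr inferInstance, bot_sup_eq, ← Ideal.map_ofList, ofList_ofFn]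
  exact maximalIdeal_mem_minimalPrimes_map hmin A

end Origin

theorem le_of_idealOfVars_mem_minimalPrimes {k : Type*} [CommRing k] [IsDomain k]
    [IsNoetherianRing k] {m n : ℕ} {f : Fin n → MvPolynomial (Fin m) k}
    (hmin : idealOfVars (Fin m) k ∈ (Ideal.span (Set.range f)).minimalPrimes) : m ≤ n := by
  let A := Localization.AtPrime (idealOfVars (Fin m) k)
  have : IsNoetherianRing A :=
    IsLocalization.isNoetherianRing (idealOfVars (Fin m) k).primeCompl A inferInstance
  simpa using length_le_length_of_mem_minimalPrimes (mem_maximalIdeal_of_mem_map_X (k := k) A)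
    (isRegular_map_X A).toIsWeaklyRegular (maximalIdeal_mem_minimalPrimes_map_ofFn A hmin)

theorem isRegularSeq_of_idealOfVars_mem_minimalPrimes {k : Type*} [Field k] {m : ℕ}
    {f : Fin m → MvPolynomial (Fin m) k} {d : Fin m → ℕ} (hf : ∀ i, (f i).IsHomogeneous (d i))
    (hmin : idealOfVars (Fin m) k ∈ (Ideal.span (Set.range f)).minimalPrimes) :
    IsRegularSeq f := by
  let A := Localization.AtPrime (idealOfVars (Fin m) k)
  have : IsNoetherianRing A :=
    IsLocalization.isNoetherianRing (idealOfVars (Fin m) k).primeCompl A inferInstance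
  have hlocal : IsWeaklyRegular A ((List.ofFn f).map (algebraMap _ A)) :=
    isWeaklyRegular_of_mem_minimalPrimes (mem_maximalIdeal_of_mem_map_X (k := k) (m := m) A)
      (isRegular_map_X A) (by simp) (maximalIdeal_mem_minimalPrimes_map_ofFn A hmin)
  rw [List.map_ofFn, ← isRegularSeq_iff_isWeaklyRegular_ofFn] at hlocal
  refine hlocal.of_map (algebraMap _ A) fun i => comap_map_span_le_of_isHomogeneous ?_ A
  rintro _ ⟨j, -, rfl⟩
  exact ⟨d j, hf j⟩

theorem quadraticMap_apply_eq_sum {ι R N : Type*} [Fintype ι] [LinearOrder ι] [CommRing R]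
    [AddCommGroup N] [Module R N] (Q : QuadraticMap R (ι → R) N) (v : ι → R) :
    Q v = ∑ i, v i ^ 2 • Q (Pi.single i 1) + ∑ i, ∑ j,
      if i < j then (v i * v j) • QuadraticMap.polar Q (Pi.single i 1) (Pi.single j 1) else 0 := by
  let e := Pi.basisFun R ι
  have hdiag (i j : ι) : (v i * v j) • Q.toBilin e (e i) (e j) =
      (if i = j then v i ^ 2 • Q (e i) else 0) +
        if i < j then (v i * v j) • QuadraticMap.polar Q (e i) (e j) else 0 := by
    rw [QuadraticMap.toBilin_apply]
    rcases lt_trichotomy i j with h | rfl | h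
    · simp [h, h.ne]
    · simp [sq]
    · simp [h.not_gt, h.ne']
  calc Q v = Q.toBilin e v v := by
        conv_lhs => rw [← Q.toQuadraticMap_toBilin e]
        rfl
    _ = ∑ i, ∑ j, (v i * v j) • Q.toBilin e (e i) (e j) := by
        rw [← LinearMap.sum_repr_mul_repr_mul e e v v]
        simp only [Finsupp.sum_fintype, zero_smul, smul_zero, Finset.sum_const_zero,
          implies_true, Pi.basisFun_repr, e, mul_smul]
    _ = _ := by
        simp only [hdiag, Finset.sum_add_distrib, Finset.sum_ite_eq, Finset.mem_univ, if_true]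
        simp [e]

theorem isHomogeneous_assocPoly {m n : ℕ} (Q : (Fin m → ZMod 2) → (Fin n → ZMod 2)) (k : Fin n) :
    (assocPoly Q k).IsHomogeneous 2 := by
  have hmonomial (a : ZMod 2) (i j : Fin m) : (C a * X i * X j).IsHomogeneous 2 := by
    simpa using ((isHomogeneous_C _ a).mul (isHomogeneous_X _ i)).mul (isHomogeneous_X _ j)
  refine .add (.sum _ _ _ fun i _ => ?_) (.sum _ _ _ fun i _ => .sum _ _ _ fun j _ => ?_)
  · simpa [sq, mul_assoc] using hmonomial _ i i
  · split_ifs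
    · exact hmonomial _ i j
    · exact isHomogeneous_zero _ _ _

theorem qpolar_eq_polar {W V : Type*} [AddCommGroup W] [AddCommGroup V] [Module (ZMod 2) V]
    (Q : W → V) (x y : W) : qpolar Q x y = QuadraticMap.polar Q x y := by
  rw [qpolar, QuadraticMap.polar, ZModModule.sub_eq_add, ZModModule.sub_eq_add]

/-- A quadratic map in the sense of `IsQuadraticMap`, bundled as a `QuadraticMap`. -/
def IsQuadraticMap.toQuadraticMap {W V : Type*} [AddCommGroup W] [Module (ZMod 2) W]
    [AddCommGroup V] [Module (ZMod 2) V] {Q : W → V} (hQ : IsQuadraticMap Q) :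
    QuadraticMap (ZMod 2) W V :=
  have hzero : Q 0 = 0 := by simpa [qpolar, ZModModule.add_self] using hQ.1 0 0 0
  have hadd (x y z : W) :
      QuadraticMap.polar Q (x + y) z = QuadraticMap.polar Q x z + QuadraticMap.polar Q y z := by
    simpa only [qpolar_eq_polar] using hQ.1 x y z
  have hcases : ∀ a : ZMod 2, a = 0 ∨ a = 1 := by decide
  QuadraticMap.ofPolar Q (fun a x => by rcases hcases a with rfl | rfl <;> simp [hzero]) hadd
    (fun a x y => by rcases hcases a with rfl | rfl <;> simp [QuadraticMap.polar, hzero])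

theorem eval_assocPoly {m n : ℕ} {Q : (Fin m → ZMod 2) → (Fin n → ZMod 2)}
    (hQ : IsQuadraticMap Q) (v : Fin m → ZMod 2) (k : Fin n) :
    eval v (assocPoly Q k) = Q v k := by
  have hcoe : ⇑hQ.toQuadraticMap = Q := rfl
  have hexpand := congrFun (quadraticMap_apply_eq_sum hQ.toQuadraticMap v) k
  rw [hcoe] at hexpand
  rw [hexpand]
  simp only [assocPoly, qpolar_eq_polar, map_add, map_sum, apply_ite (eval v), map_mul, map_pow,
    eval_C, eval_X, map_zero, Pi.add_apply, Finset.sum_apply, ite_apply, Pi.smul_apply,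
    smul_eq_mul, Pi.zero_apply]
  simp only [mul_comm, mul_left_comm, mul_assoc]

theorem bockstein_eq_mkDerivation {m : ℕ} (p : MvPolynomial (Fin m) (ZMod 2)) :
    bockstein p = mkDerivation (ZMod 2) (fun i => X i ^ 2) p := by
  let D : Derivation (ZMod 2) (MvPolynomial (Fin m) (ZMod 2)) (MvPolynomial (Fin m) (ZMod 2)) :=
    ∑ i : Fin m, (X i ^ 2 : MvPolynomial (Fin m) (ZMod 2)) • pderiv i
  have hD (q : MvPolynomial (Fin m) (ZMod 2)) : D q = bockstein q := by
    rw [← Derivation.coeFnAddMonoidHom_apply, map_sum, Finset.sum_apply]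
    rfl
  have hmk : D = mkDerivation (ZMod 2) fun i => X i ^ 2 := derivation_ext fun j => by
    rw [hD, mkDerivation_X, bockstein]
    simp [pderiv_X, Pi.single_apply]
  rw [← hD, hmk]

theorem bockstein_of_isHomogeneous_one {m : ℕ} {l : MvPolynomial (Fin m) (ZMod 2)}
    (hl : l.IsHomogeneous 1) : bockstein l = l ^ 2 := by
  rw [← mem_homogeneousSubmodule, homogeneousSubmodule_one_eq_span_X] at hl
  rw [bockstein_eq_mkDerivation]
  induction hl using Submodule.span_induction with
  | mem _ h => obtain ⟨i, rfl⟩ := h; rw [mkDerivation_X]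
  | zero => simp
  | add p q _ _ hp hq => rw [map_add, hp, hq, CharTwo.add_sq]
  | smul a p _ hp => rw [Derivation.map_smul, hp, smul_pow, ZMod.pow_card]

/-- The total Steenrod square on `F₂[x₁,…,x_m]`: the ring endomorphism with
`Sq x_i = x_i + x_i²`. -/
noncomputable def totalSquare (m : ℕ) :
    MvPolynomial (Fin m) (ZMod 2) →ₐ[ZMod 2] MvPolynomial (Fin m) (ZMod 2) :=
  aeval fun i => X i + X i ^ 2

theorem totalSquare_of_isHomogeneous_one {m : ℕ} {l : MvPolynomial (Fin m) (ZMod 2)}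
    (hl : l.IsHomogeneous 1) : totalSquare m l = l + l ^ 2 := by
  rw [← mem_homogeneousSubmodule, homogeneousSubmodule_one_eq_span_X] at hl
  induction hl using Submodule.span_induction with
  | mem _ h => obtain ⟨i, rfl⟩ := h; rw [totalSquare, aeval_X]
  | zero => simp
  | add p q _ _ hp hq => rw [map_add, hp, hq, CharTwo.add_sq]; ring
  | smul a p _ hp => rw [map_smul, hp, smul_pow, ZMod.pow_card, smul_add]

theorem totalSquare_of_isHomogeneous_two {m : ℕ} {p : MvPolynomial (Fin m) (ZMod 2)}
    (hp : p.IsHomogeneous 2) : totalSquare m p = p + bockstein p + p ^ 2 := by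
  rw [← mem_homogeneousSubmodule, ← homogeneousSubmodule_one_pow, sq] at hp
  induction hp using Submodule.mul_induction_on' with
  | mem_mul_mem l hl l' hl' =>
    rw [mem_homogeneousSubmodule] at hl hl'
    have hleibniz : bockstein (l * l') = l * l' ^ 2 + l' * l ^ 2 := by
      rw [bockstein_eq_mkDerivation, Derivation.leibniz, ← bockstein_eq_mkDerivation,
        ← bockstein_eq_mkDerivation, bockstein_of_isHomogeneous_one hl,
        bockstein_of_isHomogeneous_one hl', smul_eq_mul, smul_eq_mul]
    rw [map_mul, totalSquare_of_isHomogeneous_one hl, totalSquare_of_isHomogeneous_one hl',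
      hleibniz]
    ring
  | add p _ q _ hp hq =>
    rw [map_add, hp, hq, CharTwo.add_sq]
    simp only [bockstein_eq_mkDerivation, map_add]
    ring

theorem aeval_smul_of_isHomogeneous {σ R S : Type*} [CommSemiring R] [CommSemiring S]
    [Algebra R S] {p : MvPolynomial σ R} {d : ℕ} (hp : p.IsHomogeneous d) (c : S) (w : σ → S) :
    aeval (c • w) p = c ^ d * aeval w p := by
  simp only [aeval_def, eval₂_eq, Pi.smul_apply, smul_eq_mul, mul_pow, Finset.prod_mul_distrib,
    Finset.prod_pow_eq_pow_sum, Finset.mul_sum]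
  refine Finset.sum_congr rfl fun e he => ?_
  have hdeg : ∑ i ∈ e.support, e i = d := by
    rw [← Finsupp.degree_apply, Finsupp.degree_eq_weight_one]
    exact hp (mem_support_iff.mp he)
  rw [hdeg, mul_left_comm]

theorem aeval_add_sq_eq_zero {m : ℕ} {ι K : Type*} [CommRing K] [Algebra (ZMod 2) K]
    {f : ι → MvPolynomial (Fin m) (ZMod 2)} (hf : ∀ k, (f k).IsHomogeneous 2)
    (hclosed : ∀ k, bockstein (f k) ∈ Ideal.span (Set.range f)) {w : Fin m → K}
    (hw : ∀ k, aeval w (f k) = 0) (k : ι) : aeval (w + w ^ 2) (f k) = 0 := by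
  have hideal : Ideal.span (Set.range f) ≤ RingHom.ker (aeval (R := ZMod 2) w) := by
    rw [Ideal.span_le, Set.range_subset_iff]
    exact hw
  have hcomp : (aeval w).comp (totalSquare m) = aeval (w + w ^ 2) := by
    ext i
    simp [totalSquare]
  rw [← hcomp, AlgHom.comp_apply, totalSquare_of_isHomogeneous_two (hf k), map_add, map_add,
    map_pow, hw k, hideal (hclosed k)]
  simp

theorem support_add_sq_ssubset {σ K : Type*} [CommRing K] [Nontrivial K] [CharP K 2]
    {w : σ → K} {i : σ} (hi : w i = 1) :
    Function.support (w + w ^ 2) ⊂ Function.support w := by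
  have hle : Function.support (w + w ^ 2) ⊆ Function.support w :=
    fun j hj hwj => hj (by simp [hwj])
  exact (Set.ssubset_iff_of_subset hle).mpr
    ⟨i, by simp [hi], by simp [hi, CharTwo.add_self_eq_zero]⟩

theorem mem_range_algebraMap_of_add_sq_eq_zero {K : Type*} [Field K] [Algebra (ZMod 2) K]
    {a : K} (ha : a + a ^ 2 = 0) : a ∈ Set.range (algebraMap (ZMod 2) K) := by
  have : CharP K 2 := charP_of_injective_algebraMap (algebraMap (ZMod 2) K).injective 2
  rcases mul_eq_zero.mp (show a * (1 + a) = 0 by rw [← ha]; ring) with h | h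
  · exact ⟨0, by simp [h]⟩
  · exact ⟨1, by simp [CharTwo.add_eq_zero.mp h]⟩

theorem eq_zero_of_forall_aeval_eq_zero {m : ℕ} {ι K : Type*} [Field K] [Algebra (ZMod 2) K]
    {f : ι → MvPolynomial (Fin m) (ZMod 2)} (hf : ∀ k, (f k).IsHomogeneous 2)
    (hclosed : ∀ k, bockstein (f k) ∈ Ideal.span (Set.range f))
    (heff : ∀ v : Fin m → ZMod 2, (∀ k, eval v (f k) = 0) → v = 0) {w : Fin m → K}
    (hw : ∀ k, aeval w (f k) = 0) : w = 0 := by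
  have : CharP K 2 := charP_of_injective_algebraMap (algebraMap (ZMod 2) K).injective 2
  induction hs : Function.support w using WellFoundedLT.induction generalizing w with
  | ind s ih =>
    subst hs
    by_contra hne
    obtain ⟨i, hi⟩ := Function.ne_iff.mp hne
    let u : Fin m → K := (w i)⁻¹ • w
    have hui : u i = 1 := inv_mul_cancel₀ hi
    have hsupport : Function.support u = Function.support w :=
      Function.support_const_smul_of_ne_zero _ _ (inv_ne_zero hi)
    have hu (k : ι) : aeval u (f k) = 0 := by
      rw [aeval_smul_of_isHomogeneous (hf k), hw, mul_zero]
    have hfixed : u + u ^ 2 = 0 :=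
      ih _ (hsupport ▸ support_add_sq_ssubset hui) (aeval_add_sq_eq_zero hf hclosed hu) rfl
    choose v hv using fun j => mem_range_algebraMap_of_add_sq_eq_zero (congrFun hfixed j)
    have hv0 : v = 0 := heff v fun k => by
      rw [← aeval_eq_eval, ← aeval_algebraMap_eq_zero_iff K, Function.comp_def, funext hv]
      exact hu k
    have := hv i
    simp [hv0, hui] at this

theorem X_mem_of_isPrime {m : ℕ} {ι : Type*}
    {f : ι → MvPolynomial (Fin m) (ZMod 2)} (hf : ∀ k, (f k).IsHomogeneous 2)
    (hclosed : ∀ k, bockstein (f k) ∈ Ideal.span (Set.range f))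
    (heff : ∀ v : Fin m → ZMod 2, (∀ k, eval v (f k) = 0) → v = 0)
    {P : Ideal (MvPolynomial (Fin m) (ZMod 2))} [P.IsPrime] (hP : ∀ k, f k ∈ P) (i : Fin m) :
    X i ∈ P := by
  let w : Fin m → P.ResidueField := algebraMap (MvPolynomial (Fin m) (ZMod 2)) _ ∘ X
  have hw (k : ι) : aeval w (f k) = 0 := by
    rw [aeval_algebraMap_apply, aeval_X_left_apply, Ideal.algebraMap_residueField_eq_zero]
    exact hP k
  exact Ideal.algebraMap_residueField_eq_zero.mp
    (congrFun (eq_zero_of_forall_aeval_eq_zero hf hclosed heff hw) i)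

theorem idealOfVars_mem_minimalPrimes {m : ℕ} {ι : Type*}
    {f : ι → MvPolynomial (Fin m) (ZMod 2)} (hf : ∀ k, (f k).IsHomogeneous 2)
    (hclosed : ∀ k, bockstein (f k) ∈ Ideal.span (Set.range f))
    (heff : ∀ v : Fin m → ZMod 2, (∀ k, eval v (f k) = 0) → v = 0) :
    idealOfVars (Fin m) (ZMod 2) ∈ (Ideal.span (Set.range f)).minimalPrimes := by
  refine ⟨⟨isPrime_idealOfVars _ _, ?_⟩, fun P ⟨_, hP⟩ _ => ?_⟩
  · rw [Ideal.span_le, Set.range_subset_iff]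
    exact fun k => mem_idealOfVars_of_isHomogeneous (hf k) two_ne_zero
  · rw [Ideal.span_le, Set.range_subset_iff] at hP
    rw [idealOfVars, Ideal.span_le, Set.range_subset_iff]
    exact X_mem_of_isPrime hf hclosed heff hP

/-- If `Q : F₂^m → F₂^n` is an effective, Bockstein closed quadratic map
then `m ≤ n`; and if `m = n`, the associated polynomials form a regular sequence in every
order. -/
theorem effective_bockstein_closed_regular {m n : ℕ}
    (Q : (Fin m → ZMod 2) → (Fin n → ZMod 2)) (hQ : IsQuadraticMap Q)
    (heff : ∀ w, Q w = 0 → w = 0)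
    (hBC : ∀ k : Fin n, bockstein (assocPoly Q k) ∈ Ideal.span (Set.range (assocPoly Q))) :
    m ≤ n ∧
    (m = n → ∀ σ : Equiv.Perm (Fin n), IsRegularSeq (fun k => assocPoly Q (σ k))) := by
  have hmin : idealOfVars (Fin m) (ZMod 2) ∈
      (Ideal.span (Set.range (assocPoly Q))).minimalPrimes :=
    idealOfVars_mem_minimalPrimes (isHomogeneous_assocPoly Q) hBC fun v hv =>
      heff v (funext fun k => by rw [← eval_assocPoly hQ, hv k, Pi.zero_apply])
  refine ⟨le_of_idealOfVars_mem_minimalPrimes hmin, ?_⟩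
  rintro rfl σ
  rw [← σ.surjective.range_comp] at hmin
  exact isRegularSeq_of_idealOfVars_mem_minimalPrimes
    (fun k => isHomogeneous_assocPoly Q (σ k)) hmin
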